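/- arXiv:1607.04975 — 5 statements merged into one kernel-verified Lean document; each statement's English description precedes it below -/
import Mathlib

section
/- Let p be a prime and A a commutative ring in which m! is invertible for every natural number m < p. Let I be an ideal of A equipped with a divided power structure γ (with maps γ_n : I → A), and let φ : A →+* A be a ring endomorphism such that: φ(I) ⊆ I; φ(γ_n(x)) = γ_n(φ(x)) for all n and all x ∈ I; and φ(a) − a^p ∈ pA for every a ∈ A (φ is a Frobenius lift). Then for every x ∈ I and every r with 0 ≤ r ≤ p − 1, one has φ(γ_r(x)) ∈ p^r A, i.e. φ(γ_r(x)) lies in the ideal generated by p^r. -/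
/-!
For `x ∈ I` one has `x ^ p = p! * γ_p(x) ∈ pA`, so the Frobenius-lift congruence gives `p ∣ φ x`.
Applying `φ` to `r! * γ_r(x) = x ^ r` shows `p ^ r ∣ r! * φ (γ_r(x))`, and `r!` is a unit
for `r < p`.
-/

/-- Let `p` be a prime and `A` a commutative ring in which `m!` is invertible for every `m < p`.
Let `I` be an ideal of `A` with a divided power structure `γ`, and let `φ : A →+* A` be a
Frobenius lift preserving `I` and commuting with the divided powers. Then for every `x ∈ I` and
every `r ≤ p - 1`, `φ (γ.dpow r x)` lies in the ideal generated by `p ^ r`. -/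
theorem stmt_1 (p : ℕ) (hp : p.Prime) {A : Type*} [CommRing A]
    (hfact : ∀ m : ℕ, m < p → IsUnit (m.factorial : A))
    {I : Ideal A} (γ : DividedPowers I)
    (φ : A →+* A)
    (hφI : ∀ x ∈ I, φ x ∈ I)
    (hφγ : ∀ (n : ℕ), ∀ x ∈ I, φ (γ.dpow n x) = γ.dpow n (φ x))
    (hφp : ∀ a : A, φ a - a ^ p ∈ Ideal.span {(p : A)})
    (x : A) (hx : x ∈ I) (r : ℕ) (hr : r ≤ p - 1) :
    φ (γ.dpow r x) ∈ Ideal.span {(p : A) ^ r} := by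
  rw [Ideal.mem_span_singleton]
  have hdvd : (p : A) ∣ φ x := by
    have hpow : (p : A) ∣ x ^ p := by
      rw [← γ.factorial_mul_dpow_eq_pow hx]
      exact (Nat.cast_dvd_cast (Nat.dvd_factorial hp.pos le_rfl)).mul_right _
    exact (dvd_iff_dvd_of_dvd_sub (Ideal.mem_span_singleton.mp (hφp x))).mpr hpow
  have hr' : r < p := by have := hp.pos; omega
  rw [← (hfact r hr').dvd_mul_left, ← map_natCast φ r.factorial, ← map_mul,
    γ.factorial_mul_dpow_eq_pow hx, map_pow]
  exact pow_dvd_pow_of_dvd hdvd r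
end

section
/- Let p be an odd prime, k a perfect field of characteristic p, and n a natural number. For u ∈ 𝕎 k, the following are equivalent: (a) there exists v ∈ 𝕎 k with v − 1 in the ideal generated by p and v^{p^n} = u; (b) u − 1 lies in the ideal of 𝕎 k generated by p^{n+1}. In other words, the set of p^n-th powers of the group 1 + p·𝕎 k of principal units equals 1 + p^{n+1}·𝕎 k. -/
/-!
The forward direction is the standard fact that `p ∣ v - 1` implies `p ^ (n + 1) ∣ v ^ p ^ n - 1`.

For the converse, only the `p`-adic completeness of `𝕎 k` matters. By induction on `n` it is enough
to show that, for `m ≥ 1`, every element `1 + p ^ (m + 1) * c` is the `p`-th power of some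
`1 + p ^ m * x`. As `p` is odd, the binomial expansion reads
`(1 + p ^ m * x) ^ p = 1 + p ^ (m + 1) * (x + p * Q x)` for a polynomial `Q`
(`exists_one_add_pow_eq`), so `x` has to be a fixed point of `x ↦ c - p * Q x`. This map is a
`p`-adic contraction, hence has a fixed point (`exists_fixedPoint_of_contracting`).
-/

/-- The Banach fixed point theorem for the `a`-adic topology: a map that multiplies differences by
multiples of `a` has a fixed point. -/
theorem exists_fixedPoint_of_contracting {R : Type*} [CommRing R] (a : R)
    [IsAdicComplete (Ideal.span {a}) R] (T : R → R)
    (hT : ∀ x y, a * (x - y) ∣ T x - T y) : ∃ x, T x = x := by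
  have key : ∀ (n : ℕ) (x y : R),
      x ≡ y [SMOD (Ideal.span {a} ^ n • ⊤ : Submodule R R)] ↔ a ^ n ∣ x - y := by
    intro n x y
    rw [SModEq.sub_mem, smul_eq_mul, Ideal.mul_top, Ideal.span_singleton_pow,
      Ideal.mem_span_singleton]
  have step : ∀ n : ℕ, a ^ n ∣ T^[n + 1] 0 - T^[n] 0 := by
    intro n
    induction n with
    | zero => simp
    | succ n ih =>
      rw [Function.iterate_succ_apply' T (n + 1), Function.iterate_succ_apply' T n, pow_succ']
      rw [Function.iterate_succ_apply' T n] at ih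
      exact (mul_dvd_mul_left a ih).trans (hT _ _)
  have cauchy : ∀ {m n : ℕ}, m ≤ n → a ^ m ∣ T^[m] 0 - T^[n] 0 := by
    intro m n hmn
    induction n, hmn using Nat.le_induction with
    | base => simp
    | succ n hmn ih =>
      have h := dvd_sub ih ((pow_dvd_pow a hmn).trans (step n))
      rwa [sub_sub, add_sub_cancel] at h
  obtain ⟨L, hL⟩ := IsPrecomplete.prec (I := Ideal.span {a}) (M := R) inferInstance
    (f := fun n => T^[n] 0) (fun hmn => (key _ _ _).2 (cauchy hmn))
  refine ⟨L, sub_eq_zero.1 (IsHausdorff.haus (I := Ideal.span {a}) inferInstance _ fun n => ?_)⟩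
  rw [key, sub_zero]
  have h1 : a ^ (n + 1) ∣ T^[n + 1] 0 - L := (key _ _ _).1 (hL (n + 1))
  have h2 : a ^ n ∣ T^[n] 0 - L := (key _ _ _).1 (hL n)
  rw [Function.iterate_succ_apply'] at h1
  have h3 : a ^ n ∣ T (T^[n] 0) - T L := h2.trans ((dvd_mul_left _ _).trans (hT _ _))
  have h4 := dvd_sub ((pow_dvd_pow a n.le_succ).trans h1) h3
  rwa [sub_sub_sub_cancel_left] at h4

/-- For odd `p` and `m = l + 1 ≥ 1`, raising `1 + p ^ m * x` to the `p`-th power is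
`x ↦ x + p * Q x` in the coordinate `x`: the middle binomial terms are divisible by
`p ^ (2 * m + 1)` and the last one by `p ^ (p * m)`, both exponents being at least `m + 2`. -/
theorem exists_one_add_pow_eq {R : Type*} [CommRing R] {p : ℕ} (hp : p.Prime) (hp2 : p ≠ 2)
    (l : ℕ) : ∃ Q : Polynomial R, ∀ x : R,
      (1 + (p : R) ^ (l + 1) * x) ^ p = 1 + (p : R) ^ (l + 2) * (x + p * Q.eval x) := by
  obtain ⟨q, rfl⟩ : ∃ q, p = q + 3 :=
    ⟨p - 3, by have := hp.two_le; omega⟩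
  set P : R := ((q + 3 : ℕ) : R) with hP
  -- `B y` collects the middle binomial coefficients, divided by `p * y ^ 2`.
  let B : R → R := fun y =>
    ∑ i ∈ Finset.range (q + 1), y ^ i * (((q + 3).choose (i + 2) / (q + 3) : ℕ) : R)
  have hB : ∀ y : R, (1 + y) ^ (q + 3) = 1 + P * y + P * y ^ 2 * B y + y ^ (q + 3) := by
    intro y
    have hc : ∀ i ∈ Finset.range (q + 1), y ^ (i + 2) * (((q + 3).choose (i + 2) : ℕ) : R)
        = P * y ^ 2 * (y ^ i * (((q + 3).choose (i + 2) / (q + 3) : ℕ) : R)) := by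
      intro i hi
      have hi' := Finset.mem_range.1 hi
      have hd : q + 3 ∣ (q + 3).choose (i + 2) :=
        hp.dvd_choose_self (by omega) (by omega)
      have h : (((q + 3).choose (i + 2) : ℕ) : R)
          = P * (((q + 3).choose (i + 2) / (q + 3) : ℕ) : R) := by
        rw [hP, ← Nat.cast_mul, Nat.mul_div_cancel' hd]
      rw [h]
      ring
    rw [add_comm 1 y, add_pow, Finset.sum_range_succ, Finset.sum_range_succ',
      Finset.sum_range_succ']
    simp only [one_pow, mul_one, add_assoc, Nat.reduceAdd]
    rw [Finset.sum_congr rfl hc, ← Finset.mul_sum]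
    simp only [B, pow_one, pow_zero, Nat.choose_one_right, Nat.choose_zero_right,
      Nat.choose_self, Nat.cast_one, mul_one]
    rw [← hP]
    ring
  refine ⟨.C (P ^ (q + l * (q + 2))) * .X ^ (q + 3) + .C (P ^ l) * .X ^ 2 *
    ∑ i ∈ Finset.range (q + 1), (.C (P ^ (l + 1)) * .X) ^ i *
      .C (((q + 3).choose (i + 2) / (q + 3) : ℕ) : R), fun x => ?_⟩
  have hE : (q + l * (q + 2)) + (l + 3) = (l + 1) * (q + 3) := by
    ring
  have hE' : (P ^ (l + 1) * x) ^ (q + 3)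
      = P ^ (q + l * (q + 2)) * P ^ (l + 3) * x ^ (q + 3) := by
    rw [mul_pow, ← pow_mul, ← pow_add, hE]
  simp only [Polynomial.eval_add, Polynomial.eval_mul, Polynomial.eval_C, Polynomial.eval_pow,
    Polynomial.eval_X, Polynomial.eval_finsetSum]
  rw [hB, hE']
  simp only [B]
  ring

/-- In a `p`-adically complete ring with `p` odd, every element of `1 + (p ^ (l + 2))` is the
`p`-th power of an element of `1 + (p ^ (l + 1))`. -/
theorem exists_pow_prime_eq {R : Type*} [CommRing R] {p : ℕ} (hp : p.Prime) (hp2 : p ≠ 2)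
    [IsAdicComplete (Ideal.span {(p : R)}) R] (l : ℕ) {u : R}
    (hu : (p : R) ^ (l + 2) ∣ u - 1) : ∃ w : R, (p : R) ^ (l + 1) ∣ w - 1 ∧ w ^ p = u := by
  obtain ⟨c, hc⟩ := hu
  obtain ⟨Q, hQ⟩ := exists_one_add_pow_eq (R := R) hp hp2 l
  obtain ⟨x, hx⟩ := exists_fixedPoint_of_contracting (p : R) (fun x => c - p * Q.eval x) (by
    intro x y
    rw [sub_sub_sub_cancel_left, ← mul_sub, ← dvd_neg, ← mul_neg, neg_sub]
    exact mul_dvd_mul_left _ (Polynomial.sub_dvd_eval_sub x y Q))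
  refine ⟨1 + (p : R) ^ (l + 1) * x, by simp, ?_⟩
  rw [hQ, ← sub_eq_iff_eq_add.1 hx, ← hc, add_sub_cancel]

/-- For an odd prime `p`, a perfect field `k` of characteristic `p` and `n : ℕ`, an element
`u : 𝕎 k` is a `p^n`-th power of a principal unit (an element `v` with `v - 1 ∈ (p)`) if and
only if `u - 1` lies in the ideal generated by `p ^ (n + 1)`. In other words, the set of
`p^n`-th powers of `1 + p·𝕎 k` equals `1 + p^{n+1}·𝕎 k`. -/
theorem stmt_6 (p : ℕ) [Fact p.Prime] (hp2 : p ≠ 2) (k : Type*) [Field k] [CharP k p]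
    [PerfectRing k p] (n : ℕ) (u : WittVector p k) :
    (∃ v : WittVector p k,
        v - 1 ∈ Ideal.span {(p : WittVector p k)} ∧ v ^ p ^ n = u) ↔
      u - 1 ∈ Ideal.span {(p : WittVector p k) ^ (n + 1)} := by
  simp only [Ideal.mem_span_singleton]
  constructor
  · rintro ⟨v, hv, rfl⟩
    simpa using dvd_sub_pow_of_dvd_sub hv n
  · intro hu
    induction n generalizing u with
    | zero => exact ⟨u, by simpa using hu, by simp⟩
    | succ n ih =>
      obtain ⟨w, hw, rfl⟩ := exists_pow_prime_eq (Fact.out : p.Prime) hp2 n hu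
      obtain ⟨v, hv, rfl⟩ := ih w hw
      exact ⟨v, hv, by rw [pow_succ, pow_mul]⟩
end

section
/- Let p be an odd prime, k a perfect field of characteristic p, and n ≥ 1. Then there is a group isomorphism between the quotient of the unit group (𝕎 k)^× by its subgroup of p^n-th powers {u^{p^n} : u ∈ (𝕎 k)^×} and the (multiplicative version of the) additive group 𝕎 k / p^n·𝕎 k; in particular (𝕎 k)^×/((𝕎 k)^×)^{p^n} is isomorphic to the additive group of the length-n truncated Witt vectors 𝕎ₙ k. -/
/-!
Write `W = 𝕎 k` and let `U` be the group of principal units `1 + pW`. The isomorphism is induced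
by the logarithm `log u = lim (u ^ p ^ m - 1) / p ^ m` on `U`; since only `log u / p` modulo `p ^ n`
matters, the single approximation `ℓ(u) = (u ^ p ^ n - 1) / p ^ (n + 1)` is enough.

* For odd `p` there is a polynomial `h` with
  `(1 + p t) ^ p ^ n = 1 + p ^ (n + 1) (t + p h(t))` (`exists_poly_one_add_pow`), so `ℓ` is defined
  on `U`, and `ℓ(1 + p t) = F(t)` with `F(t) = t + p h(t)`.
* `ℓ(u v) = ℓ(u) + ℓ(v) + p ^ (n + 1) ℓ(u) ℓ(v)`, so `ℓ` is a homomorphism `U → W / p ^ n`.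
* `F` is surjective by `p`-adic completeness (`exists_add_mul_eval_eq`), hence so is `ℓ`.
* If `p ^ n ∣ F(t)`, then `p ^ n ∣ t` (`pow_dvd_of_pow_dvd_add_mul_eval`), so that
  `1 + p t = 1 + p ^ (n + 1) F(s) = (1 + p s) ^ p ^ n` for some `s`. The kernel of `ℓ` therefore
  consists of `p ^ n`-th powers.

Finally `U → Wˣ / (p ^ n)-th powers` is surjective, because `k` is perfect, and its kernel is that of
`ℓ`, because a unit whose `p ^ n`-th power lies in `U` lies in `U` itself.
-/

section Adic

open Polynomial

variable {R : Type*} [CommRing R]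

/-- The binomial expansion to second order, with an unspecified remainder. -/
lemma exists_one_add_pow_eq_s7 (y : R) (N : ℕ) :
    ∃ d : R, (1 + y) ^ N = 1 + N * y + (N.choose 2 : ℕ) * y ^ 2 + y ^ 3 * d := by
  induction N with
  | zero => exact ⟨0, by simp⟩
  | succ N ih =>
    obtain ⟨d, hd⟩ := ih
    refine ⟨(N.choose 2 : ℕ) + d + y * d, ?_⟩
    rw [pow_succ, hd, Nat.choose_succ_succ' N 1, Nat.choose_one_right]
    push_cast
    ring

/-- For odd `p`, the `p`-th power map sends `1 + p ^ j a` to `1 + p ^ (j + 1) a` up to higher order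
terms; oddness enters through `p ∣ p.choose 2`. -/
lemma exists_one_add_pow_prime_eq {p : ℕ} (hodd : Odd p) (i : ℕ) (a : R) :
    ∃ b : R, (1 + (p : R) ^ (i + 1) * a) ^ p = 1 + (p : R) ^ (i + 2) * (a + p * b) := by
  obtain ⟨q, hq⟩ := hodd
  have hc : p.choose 2 = p * q := by
    rw [Nat.choose_two_right]
    apply Nat.div_eq_of_eq_mul_left two_pos
    rw [hq, Nat.add_sub_cancel]
    ring
  obtain ⟨d, hd⟩ := exists_one_add_pow_eq_s7 ((p : R) ^ (i + 1) * a) p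
  refine ⟨(p : R) ^ i * q * a ^ 2 + (p : R) ^ (2 * i) * a ^ 3 * d, ?_⟩
  rw [hd, hc]
  push_cast
  ring

lemma exists_poly_one_add_pow {p : ℕ} (hodd : Odd p) (n : ℕ) :
    ∃ h : R[X], ∀ t : R,
      (1 + (p : R) * t) ^ p ^ n = 1 + (p : R) ^ (n + 1) * (t + p * h.eval t) := by
  have key : ∃ h : R[X],
      (1 + (p : R[X]) * X) ^ p ^ n = 1 + (p : R[X]) ^ (n + 1) * (X + (p : R[X]) * h) := by
    induction n with
    | zero => exact ⟨0, by simp⟩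
    | succ n ih =>
      obtain ⟨h, hh⟩ := ih
      obtain ⟨b, hb⟩ := exists_one_add_pow_prime_eq (R := R[X]) hodd n (X + (p : R[X]) * h)
      refine ⟨h + b, ?_⟩
      rw [pow_succ p, pow_mul, hh, hb]
      ring
  obtain ⟨h, hh⟩ := key
  refine ⟨h, fun t => ?_⟩
  simpa using congrArg (eval t) hh

/-- Over a `π`-adically complete ring, `t ↦ t + π h(t)` is surjective: the map `t ↦ c - π h(t)` is
`π`-adically contracting, and its fixed point is a preimage of `c`. -/
lemma exists_add_mul_eval_eq (π : R) [IsAdicComplete (Ideal.span {π}) R] (h : R[X]) (c : R) :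
    ∃ t, t + π * h.eval t = c := by
  have hmod : ∀ (m : ℕ) (x y : R),
      x ≡ y [SMOD ((Ideal.span {π}) ^ m • ⊤ : Submodule R R)] ↔ π ^ m ∣ x - y := fun m x y => by
    rw [SModEq.sub_mem, smul_eq_mul, Ideal.mul_top, Ideal.span_singleton_pow,
      Ideal.mem_span_singleton]
  let a : ℕ → R := fun m => (fun t => c - π * h.eval t)^[m] 0
  have ha : ∀ m, a (m + 1) = c - π * h.eval (a m) := fun m =>
    Function.iterate_succ_apply' _ _ _
  have hstep : ∀ m, π ^ m ∣ a m - a (m + 1) := by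
    intro m
    induction m with
    | zero => simp
    | succ m ih =>
      rw [ha (m + 1), ha m, pow_succ']
      have := mul_dvd_mul_left π (ih.trans (sub_dvd_eval_sub (a m) (a (m + 1)) h))
      rw [ha m] at this
      rw [← dvd_neg]
      convert this using 1
      ring
  have hcauchy : ∀ m d, π ^ m ∣ a m - a (m + d) := by
    intro m d
    induction d with
    | zero => simp
    | succ d ih =>
      have := dvd_add ih ((pow_dvd_pow π (Nat.le_add_right m d)).trans (hstep (m + d)))
      simpa [add_assoc] using this
  obtain ⟨t, ht⟩ := IsPrecomplete.prec' (I := Ideal.span {π}) a (by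
    intro m n hmn
    obtain ⟨d, rfl⟩ := Nat.exists_eq_add_of_le hmn
    exact (hmod _ _ _).2 (hcauchy m d))
  refine ⟨t, sub_eq_zero.1 (IsHausdorff.haus' (I := Ideal.span {π}) _ fun m => (hmod _ _ _).2 ?_)⟩
  have h1 := (hmod _ _ _).1 (ht m)
  have h2 := (pow_dvd_pow π m.le_succ).trans ((hmod _ _ _).1 (ht (m + 1)))
  rw [ha m] at h2
  have h3 := (h1.trans (sub_dvd_eval_sub (a m) t h)).mul_left π
  rw [sub_zero, ← dvd_neg]
  convert dvd_add h2 h3 using 1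
  ring

/-- If `h` vanishes at `0`, then `t + π h(t) = t (1 + π q)` and `1 + π q` is a unit. -/
lemma pow_dvd_of_pow_dvd_add_mul_eval (π : R) [IsAdicComplete (Ideal.span {π}) R] {h : R[X]}
    (h0 : h.eval 0 = 0) {n : ℕ} {t : R} (ht : π ^ n ∣ t + π * h.eval t) : π ^ n ∣ t := by
  obtain ⟨q, hq⟩ := sub_dvd_eval_sub t 0 h
  rw [h0, sub_zero, sub_zero] at hq
  have hu : IsUnit (π * q + 1) :=
    Ideal.mem_jacobson_bot.1 (IsAdicComplete.le_jacobson_bot (Ideal.span {π})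
      (Ideal.mem_span_singleton_self π)) q
  rw [← hu.dvd_mul_right]
  convert ht using 1
  rw [hq]
  ring

end Adic

section Witt

variable {p : ℕ} [Fact p.Prime] {k : Type*} [Field k]

/-- The group `U` of principal units of `𝕎 k`: the units reducing to `1` in `k`. -/
noncomputable def principalUnits (p : ℕ) [Fact p.Prime] (k : Type*) [Field k] :
    Subgroup (WittVector p k)ˣ :=
  (Units.map ((WittVector.constantCoeff : WittVector p k →+* k) : WittVector p k →* k)).ker

lemma mem_principalUnits {u : (WittVector p k)ˣ} :
    u ∈ principalUnits p k ↔ WittVector.constantCoeff (u : WittVector p k) = 1 := by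
  rw [principalUnits, MonoidHom.mem_ker, Units.ext_iff]
  rfl

variable [CharP k p]

/-- A unit of `𝕎 k` whose `p ^ n`-th power is principal is itself principal, as Frobenius is
injective on `k`. -/
lemma mem_principalUnits_of_pow_mem {n : ℕ} {w : (WittVector p k)ˣ}
    (hw : w ^ p ^ n ∈ principalUnits p k) : w ∈ principalUnits p k := by
  rw [mem_principalUnits, Units.val_pow_eq_pow_val, map_pow] at hw
  rw [mem_principalUnits]
  apply (iterateFrobenius_inj k p n)
  rw [iterateFrobenius_def, iterateFrobenius_def, hw, one_pow]

variable [PerfectRing k p]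

lemma p_dvd_iff_constantCoeff {x : WittVector p k} :
    (p : WittVector p k) ∣ x ↔ WittVector.constantCoeff x = 0 := by
  rw [← Ideal.mem_span_singleton, WittVector.mem_span_p_iff_coeff_zero_eq_zero]
  rfl

lemma exists_eq_one_add_of_mem {u : (WittVector p k)ˣ} (hu : u ∈ principalUnits p k) :
    ∃ t : WittVector p k, (u : WittVector p k) = 1 + p * t := by
  have : (p : WittVector p k) ∣ u - 1 := by
    rw [p_dvd_iff_constantCoeff, map_sub, map_one, mem_principalUnits.1 hu, sub_self]
  obtain ⟨t, ht⟩ := this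
  exact ⟨t, by rw [← ht]; ring⟩

lemma exists_mem_principalUnits_eq (t : WittVector p k) :
    ∃ u ∈ principalUnits p k, (u : WittVector p k) = 1 + p * t := by
  have h1 : WittVector.constantCoeff (1 + p * t : WittVector p k) = 1 := by
    rw [map_add, map_one, p_dvd_iff_constantCoeff.1 (Dvd.intro _ rfl), add_zero]
  have hu : IsUnit (1 + p * t : WittVector p k) :=
    WittVector.isUnit_of_coeff_zero_ne_zero _ (by
      rw [← WittVector.constantCoeff_apply, h1]
      exact one_ne_zero)
  exact ⟨hu.unit, mem_principalUnits.2 h1, rfl⟩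

/-- Every unit of `𝕎 k` is a principal unit up to a `p ^ n`-th power, as `k` is perfect. -/
lemma exists_mul_pow_mem_principalUnits (n : ℕ) (u : (WittVector p k)ˣ) :
    ∃ w : (WittVector p k)ˣ, u * w ^ p ^ n ∈ principalUnits p k := by
  have hu0 : WittVector.constantCoeff (u : WittVector p k) ≠ 0 :=
    (u.isUnit.map WittVector.constantCoeff).ne_zero
  obtain ⟨b, hb⟩ := (bijective_iterateFrobenius (R := k) (p := p) (n := n)).2
    (WittVector.constantCoeff (u : WittVector p k))⁻¹
  rw [iterateFrobenius_def] at hb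
  have hb0 : b ≠ 0 := by
    rintro rfl
    rw [zero_pow (pow_ne_zero _ (Fact.out : p.Prime).ne_zero)] at hb
    exact inv_ne_zero hu0 hb.symm
  obtain ⟨w, rfl⟩ := WittVector.constantCoeff_surjective p b
  refine ⟨(WittVector.isUnit_of_coeff_zero_ne_zero w hb0).unit, ?_⟩
  rw [mem_principalUnits, Units.val_mul, Units.val_pow_eq_pow_val, IsUnit.unit_spec, map_mul,
    map_pow, hb, mul_inv_cancel₀ hu0]

/-- The truncated logarithm `u ↦ (u ^ p ^ n - 1) / p ^ (n + 1)` as a homomorphism from the principal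
units onto `𝕎 k / p ^ n`; its kernel consists of the principal units that are `p ^ n`-th powers
in `(𝕎 k)ˣ`. -/
lemma exists_log (hp2 : p ≠ 2) (n : ℕ) :
    ∃ L : principalUnits p k →*
        Multiplicative (WittVector p k ⧸ Ideal.span {(p : WittVector p k) ^ n}),
      Function.Surjective L ∧ ∀ u, L u = 1 ↔ ∃ w : (WittVector p k)ˣ, w ^ p ^ n = u := by
  have hp0 : (p : WittVector p k) ≠ 0 := WittVector.p_nonzero p k
  have hodd : Odd p := (Fact.out : p.Prime).odd_of_ne_two hp2
  obtain ⟨h, hh⟩ := exists_poly_one_add_pow (R := WittVector p k) hodd n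
  have h0 : h.eval 0 = 0 := by
    have := hh 0
    simpa [hp0] using this
  have hex : ∀ u : principalUnits p k, ∃ l : WittVector p k,
      ((u : (WittVector p k)ˣ) : WittVector p k) ^ p ^ n = 1 + (p : WittVector p k) ^ (n + 1) * l :=
    fun u => by
      obtain ⟨t, ht⟩ := exists_eq_one_add_of_mem u.2
      exact ⟨_, by rw [ht, hh]⟩
  choose l hl using hex
  have hcancel : ∀ {x y : WittVector p k},
      1 + (p : WittVector p k) ^ (n + 1) * x = 1 + (p : WittVector p k) ^ (n + 1) * y → x = y :=
    fun e => mul_left_cancel₀ (pow_ne_zero _ hp0) (add_left_cancel e)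
  have hlF : ∀ (u : principalUnits p k) (t : WittVector p k),
      ((u : (WittVector p k)ˣ) : WittVector p k) = 1 + p * t → l u = t + p * h.eval t :=
    fun u t ht => hcancel (by rw [← hl, ht, hh])
  have hmul : ∀ u v, l (u * v) = l u + l v + (p : WittVector p k) ^ (n + 1) * (l u * l v) :=
    fun u v => hcancel (by
      rw [← hl, Subgroup.coe_mul, Units.val_mul, mul_pow, hl, hl]
      ring)
  let I : Ideal (WittVector p k) := Ideal.span {(p : WittVector p k) ^ n}
  let L : principalUnits p k →* Multiplicative (WittVector p k ⧸ I) :=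
    MonoidHom.mk' (fun u => Multiplicative.ofAdd (Ideal.Quotient.mk I (l u))) (fun u v => by
      rw [← ofAdd_add, ← map_add, hmul]
      congr 1
      rw [Ideal.Quotient.eq, Ideal.mem_span_singleton]
      exact ⟨p * (l u * l v), by ring⟩)
  have hL : ∀ u, L u = 1 ↔ (p : WittVector p k) ^ n ∣ l u := fun u => by
    rw [← Ideal.mem_span_singleton, ← Ideal.Quotient.eq_zero_iff_mem]
    rfl
  refine ⟨L, fun y => ?_, fun u => ?_⟩
  · obtain ⟨c, hc⟩ := Ideal.Quotient.mk_surjective (Multiplicative.toAdd y)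
    obtain ⟨t, ht⟩ := exists_add_mul_eval_eq (p : WittVector p k) h c
    obtain ⟨u, hu, hut⟩ := exists_mem_principalUnits_eq t
    refine ⟨⟨u, hu⟩, ?_⟩
    change Multiplicative.ofAdd (Ideal.Quotient.mk I (l ⟨u, hu⟩)) = y
    rw [hlF ⟨u, hu⟩ t hut, ht, hc]
    rfl
  · constructor
    · intro hu
      obtain ⟨t, ht⟩ := exists_eq_one_add_of_mem u.2
      rw [hL, hlF u t ht] at hu
      obtain ⟨c, rfl⟩ := pow_dvd_of_pow_dvd_add_mul_eval _ h0 hu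
      obtain ⟨s, hs⟩ := exists_add_mul_eval_eq (p : WittVector p k) h c
      obtain ⟨w, -, hw⟩ := exists_mem_principalUnits_eq s
      refine ⟨w, Units.ext ?_⟩
      rw [Units.val_pow_eq_pow_val, hw, hh, hs, ht]
      ring
    · rintro ⟨w, hw⟩
      have hwU : w ∈ principalUnits p k := mem_principalUnits_of_pow_mem (n := n) (hw ▸ u.2)
      have hu : u = ⟨w, hwU⟩ ^ p ^ n := Subtype.ext hw.symm
      -- The target is killed by `p ^ n`.
      rw [hu, map_pow, ← toAdd_eq_zero, toAdd_pow, nsmul_eq_mul,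
        ← map_natCast (Ideal.Quotient.mk I), Nat.cast_pow,
        Ideal.Quotient.eq_zero_iff_mem.2 (Ideal.mem_span_singleton_self _), zero_mul]

end Witt

/-- For an odd prime `p`, a perfect field `k` of characteristic `p` and `n ≥ 1`, the quotient
of the unit group `(𝕎 k)ˣ` by the subgroup of `p^n`-th powers is isomorphic as a group to the
(multiplicatively written) additive group `𝕎 k / p^n 𝕎 k`, hence to the additive group of the
length-`n` truncated Witt vectors `𝕎ₙ k`. -/
theorem stmt_7 (p : ℕ) [Fact p.Prime] (hp2 : p ≠ 2) (k : Type*) [Field k] [CharP k p]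
    [PerfectRing k p] (n : ℕ) (hn : 1 ≤ n) :
    Nonempty
      (((WittVector p k)ˣ ⧸
          (powMonoidHom (p ^ n) : (WittVector p k)ˣ →* (WittVector p k)ˣ).range) ≃*
        Multiplicative (WittVector p k ⧸ Ideal.span {(p : WittVector p k) ^ n})) ∧
    Nonempty
      (((WittVector p k)ˣ ⧸
          (powMonoidHom (p ^ n) : (WittVector p k)ˣ →* (WittVector p k)ˣ).range) ≃*
        Multiplicative (TruncatedWittVector p n k)) := by
  obtain ⟨L, hLs, hLk⟩ := exists_log (p := p) (k := k) hp2 n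
  let P := (powMonoidHom (p ^ n) : (WittVector p k)ˣ →* (WittVector p k)ˣ).range
  let ψ : principalUnits p k →* (WittVector p k)ˣ ⧸ P :=
    (QuotientGroup.mk' P).comp (principalUnits p k).subtype
  have hψs : Function.Surjective ψ := fun y => by
    obtain ⟨u, rfl⟩ := QuotientGroup.mk'_surjective P y
    obtain ⟨w, hw⟩ := exists_mul_pow_mem_principalUnits n u
    refine ⟨⟨_, hw⟩, ?_⟩
    exact (QuotientGroup.eq (s := P)).2 ⟨w⁻¹, by simp⟩
  have hker : ψ.ker = L.ker := by
    ext u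
    rw [MonoidHom.mem_ker, MonoidHom.mem_ker, hLk]
    exact QuotientGroup.eq_one_iff _
  let e₁ : ((WittVector p k)ˣ ⧸ P) ≃*
      Multiplicative (WittVector p k ⧸ Ideal.span {(p : WittVector p k) ^ n}) :=
    (QuotientGroup.quotientKerEquivOfSurjective ψ hψs).symm.trans
      ((QuotientGroup.quotientMulEquivOfEq hker).trans
        (QuotientGroup.quotientKerEquivOfSurjective L hLs))
  have hI : Ideal.span {(p : WittVector p k) ^ n} =
      RingHom.ker (WittVector.truncate (p := p) (R := k) n) := by
    ext x
    rw [WittVector.mem_span_p_pow_iff_le_coeff_eq_zero, WittVector.mem_ker_truncate]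
  let e₂ : (WittVector p k ⧸ Ideal.span {(p : WittVector p k) ^ n}) ≃+*
      TruncatedWittVector p n k :=
    (Ideal.quotEquivOfEq hI).trans
      (RingHom.quotientKerEquivOfSurjective (WittVector.truncate_surjective p n k))
  exact ⟨⟨e₁⟩, ⟨e₁.trans e₂.toAddEquiv.toMultiplicative⟩⟩
end

section
/- Let 𝒜 be an abelian category (admitting a derived category D(𝒜)), let N be a natural number, and let C be a cochain complex over 𝒜 together with integers a ≤ b such that H^i(C) = 0 for all i < a and all i > b, and such that N • id_{H^i(C)} = 0 for every i. Then for every cochain complex K over 𝒜 and every morphism f : K ⟶ C in the derived category D(𝒜), one has N^{b−a+1} • f = 0. -/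
/-!
The proof is a dévissage along the canonical filtration. The claim reduces to `f = 𝟙`, that is, to
`N ^ n • 𝟙 = 0` on an object of `D(𝒜)` whose cohomology is killed by `N` and lives in `n`
consecutive degrees, and this goes by induction on `n`.

For `n = 0` the object is zero. For the inductive step, let `b` be the top degree and consider the
truncation triangle `τ≤(b-1) C ⟶ C ⟶ τ≥b C`. The third term is the single complex on `H^b(C)`, so
it is killed by `N`; the first is killed by `N ^ n` by induction. Annihilators multiply in a
distinguished triangle (`smul_id_eq_zero_of_distTriang`): as `N • 𝟙` on the middle term dies in the
third term, it factors through the first one.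
-/

open CategoryTheory CategoryTheory.Limits

open Pretriangulated DerivedCategory

/-- Annihilation of an object by `N` passes to its retracts. -/
lemma smul_id_eq_zero_of_retract {𝒞 : Type*} [Category 𝒞] [Preadditive 𝒞] {X Y : 𝒞}
    (e : Retract Y X) {N : ℕ} (h : N • 𝟙 X = 0) : N • 𝟙 Y = 0 := by
  have : N • 𝟙 Y = e.i ≫ (N • 𝟙 X) ≫ e.r := by simp
  rw [this, h, zero_comp, comp_zero]

/-- In a distinguished triangle, the annihilators of the outer terms multiply to an annihilator of
the middle term. -/
lemma smul_id_eq_zero_of_distTriang {𝒟 : Type*} [Category 𝒟] [Preadditive 𝒟] [HasZeroObject 𝒟]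
    [HasShift 𝒟 ℤ] [∀ n : ℤ, (shiftFunctor 𝒟 n).Additive] [Pretriangulated 𝒟]
    {T : Triangle 𝒟} (hT : T ∈ distTriang 𝒟) {M N : ℕ}
    (h₁ : M • 𝟙 T.obj₁ = 0) (h₃ : N • 𝟙 T.obj₃ = 0) : (M * N) • 𝟙 T.obj₂ = 0 := by
  obtain ⟨g, hg⟩ := T.coyoneda_exact₂ hT (N • 𝟙 T.obj₂) (by
    have : (N • 𝟙 T.obj₂) ≫ T.mor₂ = T.mor₂ ≫ (N • 𝟙 T.obj₃) := by simp
    rw [this, h₃, comp_zero])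
  have hMg : M • g = 0 := by
    have : M • g = g ≫ (M • 𝟙 T.obj₁) := by simp
    rw [this, h₁, comp_zero]
  rw [mul_smul, hg, ← Preadditive.nsmul_comp, hMg, zero_comp]

/-- Complexes whose cohomology is concentrated in degree `n` and killed by `N` are killed by `N` in
the derived category, being isomorphic there to a single complex. -/
lemma smul_id_Q_obj_eq_zero_of_isGE_of_isLE {𝒜 : Type*} [Category 𝒜] [Abelian 𝒜]
    [HasDerivedCategory 𝒜] {N : ℕ} (C : CochainComplex 𝒜 ℤ) (n : ℤ) [C.IsGE n] [C.IsLE n]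
    (hN : N • 𝟙 (C.homology n) = 0) : N • 𝟙 (Q.obj C) = 0 := by
  obtain ⟨Y, ⟨e⟩⟩ := exists_iso_singleFunctor_obj_of_isGE_of_isLE (Q.obj C) n
  let e' : C.homology n ≅ Y := ((homologyFunctorFactors 𝒜 n).app C).symm ≪≫
    (homologyFunctor 𝒜 n).mapIso e ≪≫ (singleFunctorCompHomologyFunctorIso 𝒜 n).app Y
  have hY : N • 𝟙 Y = 0 := smul_id_eq_zero_of_retract e'.symm.retract hN
  refine smul_id_eq_zero_of_retract e.retract ?_
  rw [← CategoryTheory.Functor.map_id, ← Functor.map_nsmul, hY, Functor.map_zero]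

/-- The dévissage: `n` counts the degrees in `[a, b]`, so that `n = 0` means `b = a - 1`. -/
lemma pow_smul_id_Q_obj_eq_zero {𝒜 : Type*} [Category 𝒜] [Abelian 𝒜]
    [HasDerivedCategory 𝒜] {N : ℕ} (a : ℤ) (n : ℕ) :
    ∀ (C : CochainComplex 𝒜 ℤ) (b : ℤ) (_ : b + 1 = a + n) (_ : C.IsGE a) (_ : C.IsLE b)
      (_ : ∀ i : ℤ, N • 𝟙 (C.homology i) = 0), N ^ n • 𝟙 (Q.obj C) = 0 := by
  induction n with
  | zero =>
    intro C b hb _ _ _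
    have hC : IsZero (Q.obj C) := TStructure.t.isZero (Q.obj C) b a (by lia)
    exact hC.eq_of_src _ _
  | succ n ih =>
    intro C b hb _ _ hN
    have hle (i : ℤ) (hi : i ≤ b - 1) : (C.truncLE (b - 1)).homology i ≅ C.homology i :=
      have := C.quasiIsoAt_ιTruncLE (b - 1) i hi
      isoOfQuasiIsoAt (C.ιTruncLE (b - 1)) i
    have hge (i : ℤ) (hi : b ≤ i) : C.homology i ≅ (C.truncGE b).homology i :=
      have := C.quasiIsoAt_πTruncGE b i hi
      isoOfQuasiIsoAt (C.πTruncGE b) i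
    have h₁ : N ^ n • 𝟙 (Q.obj (C.truncLE (b - 1))) = 0 := by
      refine ih _ (b - 1) (by push_cast at hb; lia) ?_ inferInstance fun i ↦ ?_
      · rw [CochainComplex.isGE_iff]
        intro i hi
        rw [HomologicalComplex.exactAt_iff_isZero_homology]
        by_cases hib : i ≤ b - 1
        · exact (C.isZero_of_isGE a i hi).of_iso (hle i hib)
        · exact (C.truncLE (b - 1)).isZero_of_isLE (b - 1) i (by lia)
      · by_cases hib : i ≤ b - 1
        · exact smul_id_eq_zero_of_retract (hle i hib).retract (hN i)
        · exact ((C.truncLE (b - 1)).isZero_of_isLE (b - 1) i (by lia)).eq_of_src _ _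
    have h₃ : N • 𝟙 (Q.obj (C.truncGE b)) = 0 := by
      have : (C.truncGE b).IsLE b := by
        rw [CochainComplex.isLE_iff]
        intro i hi
        rw [HomologicalComplex.exactAt_iff_isZero_homology]
        exact (C.isZero_of_isLE b i hi).of_iso (hge i hi.le).symm
      exact smul_id_Q_obj_eq_zero_of_isGE_of_isLE _ b
        (smul_id_eq_zero_of_retract (hge b le_rfl).symm.retract (hN b))
    -- The third term of the triangle is the cokernel of `τ≤(b-1) C ⟶ C`, which is only
    -- quasi-isomorphic to `τ≥b C`.
    let e := asIso (Q.map (C.shortComplexTruncLEX₃ToTruncGE (b - 1) b (by lia)))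
    rw [pow_succ]
    exact smul_id_eq_zero_of_distTriang
      (triangleOfSES_distinguished (C.shortComplexTruncLE_shortExact (b - 1))) h₁
      (smul_id_eq_zero_of_retract e.retract h₃)

/-- Let `𝒜` be an abelian category with a derived category, `N : ℕ`, and `C` a cochain
complex over `𝒜` whose cohomology vanishes outside degrees `a ≤ i ≤ b` and is annihilated by
`N` in every degree. Then every morphism `K ⟶ C` in the derived category `D(𝒜)` is annihilated
by `N ^ (b - a + 1)`. -/
theorem stmt_11 {𝒜 : Type*} [Category 𝒜] [Abelian 𝒜] [HasDerivedCategory 𝒜]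
    (N : ℕ) (C : CochainComplex 𝒜 ℤ) (a b : ℤ) (hab : a ≤ b)
    (hlo : ∀ i : ℤ, i < a → IsZero (C.homology i))
    (hhi : ∀ i : ℤ, b < i → IsZero (C.homology i))
    (hN : ∀ i : ℤ, N • (𝟙 (C.homology i)) = 0)
    (K : CochainComplex 𝒜 ℤ)
    (f : DerivedCategory.Q.obj K ⟶ DerivedCategory.Q.obj C) :
    N ^ (b - a + 1).toNat • f = 0 := by
  have hC : N ^ (b - a + 1).toNat • 𝟙 (DerivedCategory.Q.obj C) = 0 :=
    pow_smul_id_Q_obj_eq_zero a _ C b (by lia)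
      ((C.isGE_iff a).2 fun i hi ↦ (C.exactAt_iff_isZero_homology i).2 (hlo i hi))
      ((C.isLE_iff b).2 fun i hi ↦ (C.exactAt_iff_isZero_homology i).2 (hhi i hi)) hN
  rw [← Category.comp_id f, ← Preadditive.comp_nsmul, hC, comp_zero]
end

section
/- Let 𝒜 be an abelian category (admitting a derived category D(𝒜)), let N be a natural number, and let φ : C ⟶ C′ be a morphism of cochain complexes over 𝒜 whose mapping cone Q satisfies: there are integers a ≤ b with H^i(Q) = 0 for all i < a and all i > b, and N • id_{H^i(Q)} = 0 for every i. Then for every cochain complex K over 𝒜, the induced homomorphism Hom_{D(𝒜)}(K, C) → Hom_{D(𝒜)}(K, C′) of abelian groups has kernel and cokernel annihilated by N^{b−a+1}. -/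
/-!
The cone triangle `C ⟶ C' ⟶ Q ⟶ C⟦1⟧` becomes distinguished in the derived category, and
applying `Hom(K, -)` shows that the kernel in question is a quotient of `Hom(K, Q⟦-1⟧)` and the
cokernel a subgroup of `Hom(K, Q)`. It therefore suffices that `N ^ (b - a + 1)` kills the
identity of `Q` in the derived category (`pow_nsmul_id_Q_obj`).

This is proved by induction on the length of the interval containing the cohomology. The
truncation triangle `τ≤a Q ⟶ Q ⟶ τ≥(a+1) Q ⟶` has a first term isomorphic in the derived
category to `H^a(Q)[-a]`, whose identity is killed by `N` (`nsmul_id_Q_obj_of_isGE_of_isLE`), and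
a third term to which the induction hypothesis applies. In a distinguished triangle,
annihilators of the outer terms multiply to an annihilator of the middle term
(`mul_nsmul_id_of_distTriang`).
-/

open CategoryTheory CategoryTheory.Limits

namespace ConeAnnihilation

lemma nsmul_id_of_iso {D : Type*} [Category D] [Preadditive D] {X Y : D} (e : X ≅ Y) {m : ℕ}
    (h : m • 𝟙 X = 0) : m • 𝟙 Y = 0 := by
  have : m • 𝟙 Y = e.inv ≫ (m • 𝟙 X) ≫ e.hom := by simp
  rw [this, h, zero_comp, comp_zero]

lemma nsmul_id_map {D E : Type*} [Category D] [Category E] [Preadditive D] [Preadditive E]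
    (F : D ⥤ E) [F.Additive] {X : D} {m : ℕ} (h : m • 𝟙 X = 0) : m • 𝟙 (F.obj X) = 0 := by
  rw [← F.map_id, ← F.map_nsmul, h, F.map_zero]

lemma nsmul_hom_to {D : Type*} [Category D] [Preadditive D] {X Y : D} {m : ℕ}
    (h : m • 𝟙 Y = 0) (f : X ⟶ Y) : m • f = 0 := by
  have : m • f = f ≫ (m • 𝟙 Y) := by simp
  rw [this, h, comp_zero]

open Pretriangulated in
/-- Since `n • 𝟙` vanishes after composing with `T.mor₂`, it factors through `T.obj₁`, where `m`
kills it. -/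
lemma mul_nsmul_id_of_distTriang {D : Type*} [Category D] [Preadditive D] [HasZeroObject D]
    [HasShift D ℤ] [∀ n : ℤ, (shiftFunctor D n).Additive] [Pretriangulated D]
    (T : Triangle D) (hT : T ∈ distTriang D) {m n : ℕ}
    (h₁ : m • 𝟙 T.obj₁ = 0) (h₃ : n • 𝟙 T.obj₃ = 0) : (m * n) • 𝟙 T.obj₂ = 0 := by
  obtain ⟨g, hg⟩ := T.coyoneda_exact₂ hT (n • 𝟙 T.obj₂) (by
    simpa using nsmul_hom_to h₃ T.mor₂)
  rw [mul_nsmul', hg, ← Preadditive.nsmul_comp, nsmul_hom_to h₁ g, zero_comp]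

variable {𝒜 : Type*} [Category 𝒜] [Abelian 𝒜] [HasDerivedCategory 𝒜]

/-- A complex whose cohomology is concentrated in degree `a` is isomorphic in the derived category
to its cohomology placed in degree `a`, so annihilators of the latter transfer to it. -/
lemma nsmul_id_Q_obj_of_isGE_of_isLE {N : ℕ} (K : CochainComplex 𝒜 ℤ) (a : ℤ)
    [K.IsGE a] [K.IsLE a] (hN : N • 𝟙 (K.homology a) = 0) :
    N • 𝟙 (DerivedCategory.Q.obj K) = 0 := by
  obtain ⟨Y, ⟨e⟩⟩ :=
    (DerivedCategory.Q.obj K).exists_iso_singleFunctor_obj_of_isGE_of_isLE a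
  have eY : K.homology a ≅ Y :=
    ((DerivedCategory.homologyFunctorFactors 𝒜 a).app K).symm ≪≫
      (DerivedCategory.homologyFunctor 𝒜 a).mapIso e ≪≫
      (DerivedCategory.singleFunctorCompHomologyFunctorIso 𝒜 a).app Y
  exact nsmul_id_of_iso e.symm
    (nsmul_id_map (DerivedCategory.singleFunctor 𝒜 a) (nsmul_id_of_iso eY hN))

/-- The canonical map `τ≤n K ⟶ K` is an isomorphism on cohomology in degrees at most `n`. -/
noncomputable def homologyTruncLEIso (K : CochainComplex 𝒜 ℤ) (n i : ℤ) (hi : i ≤ n) :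
    (K.truncLE n).homology i ≅ K.homology i :=
  have := K.quasiIsoAt_ιTruncLE n i hi
  isoOfQuasiIsoAt (K.ιTruncLE n) i

/-- The canonical map `K ⟶ τ≥n K` is an isomorphism on cohomology in degrees at least `n`. -/
noncomputable def homologyTruncGEIso (K : CochainComplex 𝒜 ℤ) (n i : ℤ) (hi : n ≤ i) :
    K.homology i ≅ (K.truncGE n).homology i :=
  have := K.quasiIsoAt_πTruncGE n i hi
  isoOfQuasiIsoAt (K.πTruncGE n) i

/-- A complex with cohomology killed by `N` and concentrated in the `n` degrees
`a, …, a + n - 1` is killed by `N ^ n` in the derived category. -/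
lemma pow_nsmul_id_Q_obj {N : ℕ} (n : ℕ) : ∀ (K : CochainComplex 𝒜 ℤ) (a : ℤ),
    (∀ i : ℤ, i < a → IsZero (K.homology i)) →
    (∀ i : ℤ, a + n ≤ i → IsZero (K.homology i)) →
    (∀ i : ℤ, N • 𝟙 (K.homology i) = 0) →
    N ^ n • 𝟙 (DerivedCategory.Q.obj K) = 0 := by
  induction n with
  | zero =>
    intro K a hlo hhi _
    have hK (i : ℤ) : IsZero (K.homology i) := by
      by_cases hi : i < a
      · exact hlo i hi
      · exact hhi i (by simpa using hi)
    have : K.IsGE a := by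
      rw [CochainComplex.isGE_iff]
      exact fun i _ ↦ (K.exactAt_iff_isZero_homology i).2 (hK i)
    have : K.IsLE a := by
      rw [CochainComplex.isLE_iff]
      exact fun i _ ↦ (K.exactAt_iff_isZero_homology i).2 (hK i)
    exact nsmul_id_Q_obj_of_isGE_of_isLE K a ((hK a).eq_of_src _ _)
  | succ n ih =>
    intro K a hlo hhi hN
    have : (K.truncLE a).IsGE a := by
      rw [CochainComplex.isGE_iff]
      exact fun i hi ↦ (HomologicalComplex.exactAt_iff_isZero_homology _ i).2
        ((hlo i hi).of_iso (homologyTruncLEIso K a i hi.le))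
    have h₁ : N • 𝟙 (DerivedCategory.Q.obj (K.truncLE a)) = 0 :=
      nsmul_id_Q_obj_of_isGE_of_isLE _ a
        (nsmul_id_of_iso (homologyTruncLEIso K a a le_rfl).symm (hN a))
    have h₃ : N ^ n • 𝟙 (DerivedCategory.Q.obj (K.truncGE (a + 1))) = 0 := by
      have hlo' (i : ℤ) (hi : i < a + 1) : IsZero ((K.truncGE (a + 1)).homology i) :=
        CochainComplex.isZero_of_isGE _ (a + 1) i hi
      refine ih _ (a + 1) hlo' (fun i hi ↦ ?_) (fun i ↦ ?_)
      · exact (hhi i (by push_cast; lia)).of_iso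
          (homologyTruncGEIso K (a + 1) i (by lia)).symm
      · by_cases hi : i < a + 1
        · exact (hlo' i hi).eq_of_src _ _
        · exact nsmul_id_of_iso (homologyTruncGEIso K (a + 1) i (by lia)) (hN i)
    rw [pow_succ']
    -- The third term of this triangle is the cokernel of `τ≤a K ⟶ K`, which is
    -- quasi-isomorphic to `τ≥(a+1) K`.
    exact mul_nsmul_id_of_distTriang _
      (DerivedCategory.triangleOfSES_distinguished (K.shortComplexTruncLE_shortExact a)) h₁
      (nsmul_id_of_iso (asIso (DerivedCategory.Q.map
        (K.shortComplexTruncLEX₃ToTruncGE a (a + 1) rfl))).symm h₃)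

end ConeAnnihilation

/-- Let `𝒜` be an abelian category with a derived category, `N : ℕ`, and `φ : C ⟶ C'` a
morphism of cochain complexes whose mapping cone has cohomology vanishing outside degrees
`a ≤ i ≤ b` and annihilated by `N` in every degree. Then for every complex `K`, the induced
map `Hom_{D(𝒜)}(K, C) → Hom_{D(𝒜)}(K, C')` has kernel and cokernel annihilated by
`N ^ (b - a + 1)`. -/
theorem stmt_12 {𝒜 : Type*} [Category 𝒜] [Abelian 𝒜] [HasDerivedCategory 𝒜]
    (N : ℕ) {C C' : CochainComplex 𝒜 ℤ} (φ : C ⟶ C') (a b : ℤ) (hab : a ≤ b)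
    (hlo : ∀ i : ℤ, i < a → IsZero ((CochainComplex.mappingCone φ).homology i))
    (hhi : ∀ i : ℤ, b < i → IsZero ((CochainComplex.mappingCone φ).homology i))
    (hN : ∀ i : ℤ, N • (𝟙 ((CochainComplex.mappingCone φ).homology i)) = 0)
    (K : CochainComplex 𝒜 ℤ) :
    (∀ f : DerivedCategory.Q.obj K ⟶ DerivedCategory.Q.obj C,
        f ≫ DerivedCategory.Q.map φ = 0 → N ^ (b - a + 1).toNat • f = 0) ∧
    (∀ g : DerivedCategory.Q.obj K ⟶ DerivedCategory.Q.obj C',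
        ∃ f : DerivedCategory.Q.obj K ⟶ DerivedCategory.Q.obj C,
          N ^ (b - a + 1).toNat • g = f ≫ DerivedCategory.Q.map φ) := by
  have key : N ^ (b - a + 1).toNat •
      𝟙 (DerivedCategory.Q.obj (CochainComplex.mappingCone φ)) = 0 :=
    ConeAnnihilation.pow_nsmul_id_Q_obj _ _ a hlo (fun i hi ↦ hhi i (by lia)) hN
  have hT := DerivedCategory.mappingCone_triangle_distinguished φ
  constructor
  · intro f hf
    -- In the inverse rotation `Q⟦-1⟧ ⟶ C ⟶ C' ⟶ Q`, the map `f` factors through `Q⟦-1⟧`.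
    obtain ⟨g, hg⟩ := Pretriangulated.Triangle.coyoneda_exact₂ _
      (Pretriangulated.inv_rot_of_distTriang _ hT) f hf
    have hg' : N ^ (b - a + 1).toNat • g = 0 := ConeAnnihilation.nsmul_hom_to
      (ConeAnnihilation.nsmul_id_map (shiftFunctor (DerivedCategory 𝒜) (-1 : ℤ)) key) g
    rw [hg]
    exact (Preadditive.nsmul_comp _ _ _).symm.trans (by rw [hg', zero_comp]; rfl)
  · intro g
    refine Pretriangulated.Triangle.coyoneda_exact₂ _ hT (N ^ (b - a + 1).toNat • g) ?_
    exact (Preadditive.nsmul_comp _ _ _).trans (ConeAnnihilation.nsmul_hom_to key _)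
end
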